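/- Assume in addition that B has finite flat dimension as a right A-module. Then for every B-module V (viewed as an A-module annihilated by I) one has Tor_n^A(B, V) = 0 for all n ≥ 1, and the natural map B ⊗_A V → V is an isomorphism; equivalently, the functor i^* := B ⊗^L_A − : D^b(A-Mod) → D^b(B-Mod) is left adjoint to the restriction-of-scalars functor i_* and i^* ∘ i_* is naturally isomorphic to the identity functor of D^b(B-Mod). -/

import Mathlib

universe u

open CategoryTheory Abelian

noncomputable instance moduleCatHasDerivedCategory (R : Type u) [Ring R] :
    HasDerivedCategory (ModuleCat.{u} R) :=
  HasDerivedCategory.standard _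

section RestrictScalars

variable {R₁ R₂ : Type u} [Ring R₁] [Ring R₂] (f : R₁ →+* R₂)

instance : (ModuleCat.restrictScalars.{u} f).Additive := ⟨rfl⟩

noncomputable instance : Limits.PreservesFiniteLimits (ModuleCat.restrictScalars.{u} f) :=
  ⟨fun _ _ _ => ⟨fun {F} => ModuleCat.preservesLimit_restrictScalars f F⟩⟩

noncomputable instance : Limits.PreservesFiniteColimits (ModuleCat.restrictScalars.{u} f) :=
  ⟨fun _ _ _ => ⟨fun {F} => ModuleCat.preservesColimit_restrictScalars f F⟩⟩

end RestrictScalars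
/-- A cochain complex is bounded if its components vanish outside a finite
range of degrees. -/
def IsBoundedComplex {C : Type*} [Category C] [Limits.HasZeroMorphisms C]
    (K : CochainComplex C ℤ) : Prop :=
  ∃ a b : ℤ, ∀ i : ℤ, (i < a ∨ b < i) → Limits.IsZero (K.X i)

/-- The bounded derived category `D^b(C)`, realized as the full subcategory of
the derived category of `C` consisting of objects which are isomorphic to the
image of a bounded complex. -/
def BoundedDerivedCategory (C : Type*) [Category C] [Abelian C]
    [HasDerivedCategory C] :=
  ObjectProperty.FullSubcategory (fun Z : DerivedCategory C =>
    ∃ K : CochainComplex C ℤ, IsBoundedComplex K ∧ Nonempty (Z ≅ DerivedCategory.Q.obj K))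

noncomputable instance (C : Type*) [Category C] [Abelian C] [HasDerivedCategory C] :
    Category (BoundedDerivedCategory C) :=
  inferInstanceAs (Category (ObjectProperty.FullSubcategory _))

/-- The inclusion `D^b(C) ⥤ D(C)`. -/
noncomputable def boundedInclusion (C : Type*) [Category C] [Abelian C]
    [HasDerivedCategory C] : BoundedDerivedCategory C ⥤ DerivedCategory C :=
  ObjectProperty.ι _

section TorFunctor

variable {A B : Type u} [Ring A] [Ring B] (π : A →+* B)
  (hπ : Function.Surjective π)

/-- The submodule `(ker π)·V` of an `A`-module `V`. -/
def kerSMul (V : Type u) [AddCommGroup V] [Module A V] : Submodule A V :=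
  Submodule.span A {z : V | ∃ r ∈ RingHom.ker π, ∃ v : V, z = r • v}

/-- The action of `B` on `V / (ker π)·V`, via an arbitrary choice of lifts. -/
noncomputable def quotSMul (V : Type u) [AddCommGroup V] [Module A V] :
    SMul B (V ⧸ kerSMul π V) :=
  ⟨fun b x => Function.surjInv hπ b • x⟩

lemma quotSMul_proj (V : Type u) [AddCommGroup V] [Module A V] (a : A)
    (x : V ⧸ kerSMul π V) :
    (letI := quotSMul π hπ V; π a • x) = a • x := by
  obtain ⟨v, rfl⟩ := Submodule.Quotient.mk_surjective _ x
  have key : Function.surjInv hπ (π a) • (Submodule.Quotient.mk v : V ⧸ kerSMul π V) =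
      a • Submodule.Quotient.mk v := by
    set c := Function.surjInv hπ (π a) with hc
    have hca : π c = π a := Function.surjInv_eq hπ _
    rw [← sub_eq_zero, ← Submodule.Quotient.mk_smul, ← Submodule.Quotient.mk_smul,
      ← Submodule.Quotient.mk_sub, ← sub_smul, Submodule.Quotient.mk_eq_zero]
    exact Submodule.subset_span ⟨c - a, by simp [RingHom.mem_ker, hca], v, rfl⟩
  exact key

/-- `V / (ker π)·V` is a `B`-module. -/
noncomputable def quotModule (V : Type u) [AddCommGroup V] [Module A V] :
    Module B (V ⧸ kerSMul π V) :=
  letI := quotSMul π hπ V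
  Function.Surjective.moduleLeft π hπ (quotSMul_proj π hπ V)

lemma quotModule_proj_smul (V : Type u) [AddCommGroup V] [Module A V] (a : A)
    (x : V ⧸ kerSMul π V) :
    (letI := quotModule π hπ V; π a • x) = a • x :=
  quotSMul_proj π hπ V a x

end TorFunctor

section TorFunctor2

variable {A B : Type u} [Ring A] [Ring B] (π : A →+* B)
  (hπ : Function.Surjective π)

lemma kerSMul_le_comap {V W : ModuleCat.{u} A} (φ : V ⟶ W) :
    kerSMul π V ≤ (kerSMul π W).comap φ.hom := by
  rw [kerSMul, Submodule.span_le]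
  rintro z ⟨r, hr, v, rfl⟩
  simp only [SetLike.mem_coe, Submodule.mem_comap, map_smul]
  exact Submodule.subset_span ⟨r, hr, φ v, rfl⟩

/-- The functor `V ↦ V / (ker π)·V = B ⊗_A V` from `A`-modules to `B`-modules;
its left derived functors compute `Tor^A_n(B, -)`. -/
noncomputable def torQuotFunctor : ModuleCat.{u} A ⥤ ModuleCat.{u} B where
  obj V :=
    letI := quotModule π hπ (V : Type u)
    ModuleCat.of B ((V : Type u) ⧸ kerSMul π (V : Type u))
  map {V W} φ :=
    letI := quotModule π hπ (V : Type u)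
    letI := quotModule π hπ (W : Type u)
    ModuleCat.ofHom
    { toFun := Submodule.mapQ (kerSMul π V) (kerSMul π W) φ.hom (kerSMul_le_comap π φ)
      map_add' := by intro x y; exact map_add _ x y
      map_smul' := by
        intro b x
        obtain ⟨a, rfl⟩ := hπ b
        simp only [RingHom.id_apply]
        rw [quotModule_proj_smul π hπ, quotModule_proj_smul π hπ, map_smul] }
  map_id V := by
    refine ModuleCat.hom_ext (DFunLike.ext _ _ fun x => ?_)
    obtain ⟨v, rfl⟩ := Submodule.Quotient.mk_surjective _ x
    rfl
  map_comp {U V W} φ ψ := by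
    refine ModuleCat.hom_ext (DFunLike.ext _ _ fun x => ?_)
    obtain ⟨v, rfl⟩ := Submodule.Quotient.mk_surjective _ x
    rfl

instance : (torQuotFunctor π hπ).Additive where
  map_add := by
    intro V W φ ψ
    refine ModuleCat.hom_ext (DFunLike.ext _ _ fun x => ?_)
    obtain ⟨v, rfl⟩ := Submodule.Quotient.mk_surjective _ x
    rfl

end TorFunctor2

/-- The quotient ring `B = A / I`. -/
def QuotByIdeal (A : Type u) [Ring A] (I : Ideal A) : Type u :=
  RingQuot (fun a b : A => a ∈ I ∧ b = 0)

noncomputable instance (A : Type u) [Ring A] (I : Ideal A) : Ring (QuotByIdeal A I) :=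
  inferInstanceAs (Ring (RingQuot _))

/-- The quotient map `A → B = A / I`. -/
noncomputable def quotByIdealProj (A : Type u) [Ring A] (I : Ideal A) :
    A →+* QuotByIdeal A I :=
  RingQuot.mkRingHom _

lemma quotByIdealProj_surjective (A : Type u) [Ring A] (I : Ideal A) :
    Function.Surjective (quotByIdealProj A I) :=
  RingQuot.mkRingHom_surjective _

section Counit

variable (A : Type u) [Ring A] (I : Ideal A)

lemma kerSMul_le_ker_id (V : ModuleCat.{u} (QuotByIdeal A I)) :
    kerSMul (quotByIdealProj A I)
        ((ModuleCat.restrictScalars (quotByIdealProj A I)).obj V) ≤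
      LinearMap.ker (LinearMap.id :
        (ModuleCat.restrictScalars (quotByIdealProj A I)).obj V →ₗ[A]
          (ModuleCat.restrictScalars (quotByIdealProj A I)).obj V) := by
  rw [kerSMul, Submodule.span_le]
  rintro z ⟨r, hr, v, rfl⟩
  simp only [SetLike.mem_coe, LinearMap.mem_ker, LinearMap.id_apply]
  show (r • v : V) = 0
  have : (r • v : V) = quotByIdealProj A I r • (v : V) := rfl
  rw [this, RingHom.mem_ker.1 hr, zero_smul]

/-- The natural map `B ⊗_A V → V` for a `B`-module `V`. -/
noncomputable def counitMap (V : ModuleCat.{u} (QuotByIdeal A I)) :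
    (torQuotFunctor (quotByIdealProj A I) (quotByIdealProj_surjective A I)).obj
        ((ModuleCat.restrictScalars (quotByIdealProj A I)).obj V) ⟶ V :=
  letI := quotModule (quotByIdealProj A I) (quotByIdealProj_surjective A I)
    ((ModuleCat.restrictScalars (quotByIdealProj A I)).obj V : Type u)
  ModuleCat.ofHom
  { toFun := Submodule.liftQ _ LinearMap.id (kerSMul_le_ker_id A I V)
    map_add' := by intro x y; exact map_add _ x y
    map_smul' := by
      intro b x
      obtain ⟨a, rfl⟩ := quotByIdealProj_surjective A I b
      obtain ⟨v, rfl⟩ := Submodule.Quotient.mk_surjective _ x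
      simp only [RingHom.id_apply]
      rw [quotModule_proj_smul (quotByIdealProj A I) (quotByIdealProj_surjective A I)]
      rw [← Submodule.Quotient.mk_smul]
      show (Submodule.liftQ _ LinearMap.id (kerSMul_le_ker_id A I V))
          (Submodule.Quotient.mk (a • v)) =
        quotByIdealProj A I a •
          (Submodule.liftQ _ LinearMap.id (kerSMul_le_ker_id A I V))
            (Submodule.Quotient.mk v)
      rw [Submodule.liftQ_apply, Submodule.liftQ_apply]
      rfl }

end Counit

/-!
Put `F = B ⊗_A -`, with exact right adjoint `G` the restriction of scalars, and let `P` be a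
projective resolution of a `B`-module. If `M` is projective, so is `I M`, because `I` is. The image
of `I P₀` in the `B`-module is zero, and inductively each `I d(Pₙ)` is projective, so that
`I Pₙ → I d(Pₙ)` splits. As `I² = I`, the splitting forces `ker d ∩ I Pₙ = I ker d`, which is the
exactness of `P / I P` in positive degrees.

For the adjunction, call `X ⟶ R Y` universal if it exhibits `Y` as the value at `X` of a left
adjoint of `R`. By the five lemma, the objects admitting a universal arrow are stable under
extensions in a triangulated category, hence for bounded derived categories it suffices to treat
a module in degree zero. There the arrow `P ⟶ G (F P)` is universal because `P` and `F P` are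
K-projective. Finite flat dimension makes `F P` bounded, and the vanishing of `Tor` makes
`F P ⟶ V` a quasi-isomorphism when `P` resolves `G V`, so that `G` is fully faithful.
-/

section UniversalArrow

open Limits Pretriangulated

variable {T₁ T₂ : Type*} [Category* T₁] [Category* T₂] {R : T₂ ⥤ T₁}

/-- An arrow `f : X ⟶ R Y` is universal if every arrow `X ⟶ R W` factors uniquely as `f ≫ R g`.
This is the assertion that `Y`, with unit `f`, is the value at `X` of a left adjoint of `R`. -/
def IsUniversalArrow (R : T₂ ⥤ T₁) {X : T₁} {Y : T₂} (f : X ⟶ R.obj Y) : Prop :=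
  ∀ W : T₂, Function.Bijective fun g : Y ⟶ W => f ≫ R.map g

lemma isUniversalArrow_unit {L : T₁ ⥤ T₂} (adj : L ⊣ R) (X : T₁) :
    IsUniversalArrow R (adj.unit.app X) := fun W => by
  simpa only [funext fun g => adj.homEquiv_unit X W g] using! (adj.homEquiv X W).bijective

lemma isRightAdjoint_of_exists_isUniversalArrow
    (h : ∀ X, ∃ (Y : T₂) (f : X ⟶ R.obj Y), IsUniversalArrow R f) : R.IsRightAdjoint := by
  choose Y f hf using h
  exact ⟨_, ⟨Adjunction.adjunctionOfEquivLeft (fun X W => .ofBijective _ (hf X W)) (by simp)⟩⟩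

namespace IsUniversalArrow

lemma of_iso {X X' : T₁} {Y Y' : T₂} {f : X ⟶ R.obj Y} {f' : X' ⟶ R.obj Y'}
    (hf : IsUniversalArrow R f) (e : X ≅ X') (e' : Y ≅ Y')
    (w : f ≫ R.map e'.hom = e.hom ≫ f') : IsUniversalArrow R f' := fun W => by
  have factor : (fun g : Y' ⟶ W => f' ≫ R.map g) =
      (fun h => e.inv ≫ h) ∘ (fun g => f ≫ R.map g) ∘ fun g => e'.hom ≫ g := by
    funext g
    simp [reassoc_of% w]
  rw [factor]
  exact e.homFromEquiv.bijective.comp ((hf W).comp e'.symm.homFromEquiv.bijective)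

lemma of_isIso_comp {X : T₁} {Y Y' : T₂} {f : X ⟶ R.obj Y} (hf : IsUniversalArrow R f)
    (g : Y ⟶ Y') [IsIso g] [IsIso (f ≫ R.map g)] : IsUniversalArrow R (𝟙 (R.obj Y')) :=
  hf.of_iso (asIso (f ≫ R.map g)) (asIso g) (by simp)

lemma of_commSq {D₁ D₂ : Type*} [Category* D₁] [Category* D₂] {L₁ : T₁ ⥤ D₁} {L₂ : T₂ ⥤ D₂}
    [L₂.EssSurj] {R' : D₂ ⥤ D₁} (e : R ⋙ L₁ ≅ L₂ ⋙ R') {X : T₁} {Y : T₂} {f : X ⟶ R.obj Y}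
    (hf : IsUniversalArrow R f)
    (hX : ∀ Z, Function.Bijective (L₁.map : (X ⟶ Z) → _))
    (hY : ∀ Z, Function.Bijective (L₂.map : (Y ⟶ Z) → _)) :
    IsUniversalArrow R' (L₁.map f ≫ e.hom.app Y) := fun W => by
  let i := L₂.objObjPreimageIso W
  have factor : (fun g : L₂.obj Y ⟶ W => (L₁.map f ≫ e.hom.app Y) ≫ R'.map g) ∘
      (fun g => g ≫ i.hom) ∘ L₂.map =
        (fun h => h ≫ ((e.app (L₂.objPreimage W)).trans (R'.mapIso i)).hom) ∘ L₁.map ∘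
          fun g => f ≫ R.map g := by
    funext g
    have naturality := e.hom.naturality g
    dsimp only [Functor.comp_obj, Functor.comp_map] at naturality
    simp [reassoc_of% naturality]
  have hi : Function.Bijective ((fun g => g ≫ i.hom) ∘ L₂.map : (Y ⟶ L₂.objPreimage W) → _) :=
    i.homToEquiv.bijective.comp (hY _)
  rw [← Function.Bijective.of_comp_iff _ hi, factor]
  exact (Iso.homToEquiv _).bijective.comp ((hX _).comp (hf _))

lemma shift {M : Type*} [AddGroup M] [HasShift T₁ M] [HasShift T₂ M] [R.CommShift M]
    {X : T₁} {Y : T₂} {f : X ⟶ R.obj Y} (hf : IsUniversalArrow R f) (n : M) :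
    IsUniversalArrow R (f⟦n⟧' ≫ (R.commShiftIso n).inv.app Y) :=
  of_commSq (R.commShiftIso n).symm hf
    (fun _ => ⟨(shiftFunctor T₁ n).map_injective, (shiftFunctor T₁ n).map_surjective⟩)
    (fun _ => ⟨(shiftFunctor T₂ n).map_injective, (shiftFunctor T₂ n).map_surjective⟩)

end IsUniversalArrow

/-- The objects of `T₁` at which `R` has a left adjoint, with value satisfying `Q`. -/
def hasUniversalArrowTo (R : T₂ ⥤ T₁) (Q : ObjectProperty T₂) : ObjectProperty T₁ := fun X =>
  ∃ (Y : T₂) (f : X ⟶ R.obj Y), Q Y ∧ IsUniversalArrow R f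

instance (Q : ObjectProperty T₂) : (hasUniversalArrowTo R Q).IsClosedUnderIsomorphisms where
  of_iso e := fun ⟨Y, f, hY, hf⟩ => ⟨Y, e.inv ≫ f, hY, hf.of_iso e (Iso.refl Y) (by simp)⟩

/-- The objects `Y` of `T₂` such that `R` induces bijections on all morphisms out of `Y`. -/
def isFullyFaithfulFrom (R : T₂ ⥤ T₁) : ObjectProperty T₂ := fun Y =>
  IsUniversalArrow R (𝟙 (R.obj Y))

lemma isFullyFaithfulFrom_iff (Y : T₂) :
    isFullyFaithfulFrom R Y ↔
      ∀ W, Function.Bijective (R.map : (Y ⟶ W) → (R.obj Y ⟶ R.obj W)) := by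
  simp only [isFullyFaithfulFrom, IsUniversalArrow, Category.id_comp]

instance : (isFullyFaithfulFrom R).IsClosedUnderIsomorphisms where
  of_iso e h := h.of_iso (R.mapIso e) e (by simp)

section Shift

variable {M : Type*} [AddGroup M] [HasShift T₁ M] [HasShift T₂ M] [R.CommShift M]

instance (Q : ObjectProperty T₂) [Q.IsStableUnderShift M] :
    (hasUniversalArrowTo R Q).IsStableUnderShift M where
  isStableUnderShiftBy n :=
    ⟨fun _ ⟨Y, _, hY, hf⟩ => ⟨Y⟦n⟧, _, Q.le_shift n _ hY, hf.shift n⟩⟩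

instance : (isFullyFaithfulFrom R).IsStableUnderShift M where
  isStableUnderShiftBy n :=
    ⟨fun Y h => (h.shift n).of_iso ((R.commShiftIso n).symm.app Y) (Iso.refl _) (by simp)⟩

end Shift

section Triangulated

variable [HasZeroObject T₁] [HasZeroObject T₂] [HasShift T₁ ℤ] [HasShift T₂ ℤ]
  [Preadditive T₁] [Preadditive T₂]
  [∀ n : ℤ, (shiftFunctor T₁ n).Additive] [∀ n : ℤ, (shiftFunctor T₂ n).Additive]
  [Pretriangulated T₁] [Pretriangulated T₂] [R.CommShift ℤ] [R.IsTriangulated]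

lemma exists_mor₁_comp_eq_of_distTriang {T : Triangle T₂} (hT : T ∈ distTriang T₂) {W : T₂}
    (y : T.obj₁ ⟶ W) (hy : T.mor₃ ≫ y⟦(1 : ℤ)⟧' = 0) : ∃ z : T.obj₂ ⟶ W, T.mor₁ ≫ z = y := by
  obtain ⟨g, hg⟩ : ∃ g : T.obj₂⟦(1 : ℤ)⟧ ⟶ W⟦(1 : ℤ)⟧, y⟦(1 : ℤ)⟧' = (-T.mor₁⟦(1 : ℤ)⟧') ≫ g :=
    T.rotate.yoneda_exact₃ (rot_of_distTriang _ hT) (y⟦(1 : ℤ)⟧') hy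
  obtain ⟨z, rfl⟩ := (shiftFunctor T₂ (1 : ℤ)).map_surjective g
  exact ⟨-z, (shiftFunctor T₂ (1 : ℤ)).map_injective (by simp [hg])⟩

section FiveLemma

variable {S : Triangle T₁} {T : Triangle T₂} {f₁ : S.obj₁ ⟶ R.obj T.obj₁}
  {f₂ : S.obj₂ ⟶ R.obj T.obj₂} {f₃ : S.obj₃ ⟶ R.obj T.obj₃}

lemma injective_comp_map_of_distTriang
    (hS : S ∈ distTriang T₁) (hT : T ∈ distTriang T₂) (h₁ : IsUniversalArrow R f₁)
    (h₃ : IsUniversalArrow R f₃) (comm₁ : S.mor₁ ≫ f₂ = f₁ ≫ R.map T.mor₁)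
    (comm₂ : S.mor₂ ≫ f₃ = f₂ ≫ R.map T.mor₂)
    (comm₃ : S.mor₃ ≫ f₁⟦(1 : ℤ)⟧' = f₃ ≫ R.map T.mor₃ ≫ (R.commShiftIso (1 : ℤ)).hom.app _)
    (W : T₂) : Function.Injective fun g : T.obj₂ ⟶ W => f₂ ≫ R.map g := by
  suffices ∀ y : T.obj₂ ⟶ W, f₂ ≫ R.map y = 0 → y = 0 from
    fun g g' (hg : f₂ ≫ R.map g = f₂ ≫ R.map g') =>
      sub_eq_zero.1 (this _ (by rw [R.map_sub, Preadditive.comp_sub, hg, sub_self]))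
  intro y hy
  obtain ⟨z, rfl⟩ : ∃ z, y = T.mor₂ ≫ z := T.yoneda_exact₂ hT y <| (h₁ W).1 <| by
    simp [← reassoc_of% comm₁, hy]
  obtain ⟨w, hw⟩ := S.yoneda_exact₃ hS (f₃ ≫ R.map z) (by
    rw [reassoc_of% comm₂, ← R.map_comp, hy])
  obtain ⟨w', rfl⟩ := (h₁.shift (1 : ℤ) W).2 w
  have hz : z = T.mor₃ ≫ w' := (h₃ W).1 (by simp [hw, reassoc_of% comm₃])
  rw [hz, comp_distTriang_mor_zero₂₃_assoc _ hT, zero_comp]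

lemma surjective_comp_map_of_distTriang
    (hS : S ∈ distTriang T₁) (hT : T ∈ distTriang T₂) (h₁ : IsUniversalArrow R f₁)
    (h₃ : IsUniversalArrow R f₃) (comm₁ : S.mor₁ ≫ f₂ = f₁ ≫ R.map T.mor₁)
    (comm₂ : S.mor₂ ≫ f₃ = f₂ ≫ R.map T.mor₂)
    (comm₃ : S.mor₃ ≫ f₁⟦(1 : ℤ)⟧' = f₃ ≫ R.map T.mor₃ ≫ (R.commShiftIso (1 : ℤ)).hom.app _)
    (W : T₂) : Function.Surjective fun g : T.obj₂ ⟶ W => f₂ ≫ R.map g := by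
  intro x
  obtain ⟨y₁, hy₁ : f₁ ≫ R.map y₁ = S.mor₁ ≫ x⟩ := (h₁ W).2 (S.mor₁ ≫ x)
  have mor₃_comp : T.mor₃ ≫ y₁⟦(1 : ℤ)⟧' = 0 := (h₃ _).1 <| by
    have hy₁_shift : f₁⟦(1 : ℤ)⟧' ≫ (R.map y₁)⟦(1 : ℤ)⟧' = S.mor₁⟦(1 : ℤ)⟧' ≫ x⟦(1 : ℤ)⟧' := by
      simp only [← Functor.map_comp, hy₁]
    rw [← cancel_mono ((R.commShiftIso (1 : ℤ)).hom.app W)]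
    simp [← reassoc_of% comm₃, hy₁_shift, comp_distTriang_mor_zero₃₁_assoc _ hS]
  obtain ⟨y₂, rfl⟩ := exists_mor₁_comp_eq_of_distTriang hT y₁ mor₃_comp
  obtain ⟨z, hz⟩ := S.yoneda_exact₂ hS (x - f₂ ≫ R.map y₂) (by
    rw [Preadditive.comp_sub, ← hy₁, reassoc_of% comm₁, R.map_comp, sub_self])
  obtain ⟨z', rfl⟩ := (h₃ W).2 z
  refine ⟨y₂ + T.mor₂ ≫ z', ?_⟩
  simp [← reassoc_of% comm₂, ← hz]

end FiveLemma

lemma IsUniversalArrow.hom₂ {S : Triangle T₁} {T : Triangle T₂} (φ : S ⟶ R.mapTriangle.obj T)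
    (hS : S ∈ distTriang T₁) (hT : T ∈ distTriang T₂)
    (h₁ : IsUniversalArrow R (Y := T.obj₁) φ.hom₁) (h₃ : IsUniversalArrow R (Y := T.obj₃) φ.hom₃) :
    IsUniversalArrow R (Y := T.obj₂) φ.hom₂ := fun W =>
  ⟨injective_comp_map_of_distTriang hS hT h₁ h₃ φ.comm₁ φ.comm₂ φ.comm₃ W,
    surjective_comp_map_of_distTriang hS hT h₁ h₃ φ.comm₁ φ.comm₂ φ.comm₃ W⟩

lemma exists_hom_mapTriangle_of_isUniversalArrow {S : Triangle T₁} (hS : S ∈ distTriang T₁)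
    {Y₁ Y₃ : T₂} (f₁ : S.obj₁ ⟶ R.obj Y₁) {f₃ : S.obj₃ ⟶ R.obj Y₃} (hf₃ : IsUniversalArrow R f₃) :
    ∃ (Y₂ : T₂) (a : Y₁ ⟶ Y₂) (b : Y₂ ⟶ Y₃) (c : Y₃ ⟶ Y₁⟦(1 : ℤ)⟧)
      (φ : S ⟶ R.mapTriangle.obj (Triangle.mk a b c)),
      Triangle.mk a b c ∈ distTriang T₂ ∧ φ.hom₁ = f₁ ∧ φ.hom₃ = f₃ := by
  obtain ⟨c, hc : f₃ ≫ R.map c = _⟩ :=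
    (hf₃ _).2 (S.mor₃ ≫ f₁⟦(1 : ℤ)⟧' ≫ (R.commShiftIso (1 : ℤ)).inv.app Y₁)
  obtain ⟨Y₂, a, b, hT⟩ := distinguished_cocone_triangle₂ c
  have comm₃ : S.mor₃ ≫ f₁⟦(1 : ℤ)⟧' = f₃ ≫ R.map c ≫ (R.commShiftIso (1 : ℤ)).hom.app Y₁ := by
    simp [reassoc_of% hc]
  obtain ⟨f₂, comm₁, comm₂⟩ := complete_distinguished_triangle_morphism₂ S _ hS
    (R.map_distinguished _ hT) f₁ f₃ comm₃
  exact ⟨Y₂, a, b, c, ⟨f₁, f₂, f₃, comm₁, comm₂, comm₃⟩, hT, rfl, rfl⟩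

instance (Q : ObjectProperty T₂) [Q.IsTriangulatedClosed₂] [Q.IsClosedUnderIsomorphisms] :
    (hasUniversalArrowTo R Q).IsTriangulatedClosed₂ :=
  .mk' fun S hS ⟨Y₁, f₁, hY₁, hf₁⟩ ⟨Y₃, f₃, hY₃, hf₃⟩ => by
    obtain ⟨Y₂, a, b, c, φ, hT, rfl, rfl⟩ := exists_hom_mapTriangle_of_isUniversalArrow hS f₁ hf₃
    exact ⟨Y₂, φ.hom₂, Q.ext_of_isTriangulatedClosed₂ _ hT hY₁ hY₃, .hom₂ φ hS hT hf₁ hf₃⟩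

instance : (isFullyFaithfulFrom R).IsTriangulatedClosed₂ :=
  .mk' fun T hT h₁ h₃ =>
    .hom₂ (𝟙 (R.mapTriangle.obj T)) (R.map_distinguished T hT) hT h₁ h₃

end Triangulated
end UniversalArrow

section FullSubcategory

variable {T₁ T₂ : Type*} [Category* T₁] [Category* T₂] {R : T₂ ⥤ T₁}
  {P : ObjectProperty T₁} {Q : ObjectProperty T₂} (hR : Q ≤ P.inverseImage R)

/-- The functor between full subcategories induced by `R`. -/
def restrictFunctor : Q.FullSubcategory ⥤ P.FullSubcategory :=
  P.lift (Q.ι ⋙ R) fun Y => hR _ Y.property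

lemma bijective_map_restrictFunctor (hQ : Q ≤ isFullyFaithfulFrom R) (Y W : Q.FullSubcategory) :
    Function.Bijective ((restrictFunctor hR).map : (Y ⟶ W) → _) :=
  P.fullyFaithfulι.homEquiv.symm.bijective.comp <|
    ((isFullyFaithfulFrom_iff _).1 (hQ _ Y.property) _).comp Q.fullyFaithfulι.homEquiv.bijective

lemma isUniversalArrow_homMk {X : P.FullSubcategory} {Y : Q.FullSubcategory}
    {f : X.obj ⟶ R.obj Y.obj} (hf : IsUniversalArrow R f) :
    IsUniversalArrow (restrictFunctor hR) (ObjectProperty.homMk f : X ⟶ _) := fun W =>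
  P.fullyFaithfulι.homEquiv.symm.bijective.comp <|
    (hf W.obj).comp Q.fullyFaithfulι.homEquiv.bijective

lemma exists_adjunction_restrictFunctor (hP : P ≤ hasUniversalArrowTo R Q)
    (hQ : Q ≤ isFullyFaithfulFrom R) :
    ∃ (L : P.FullSubcategory ⥤ Q.FullSubcategory) (_ : L ⊣ restrictFunctor hR),
      Nonempty (restrictFunctor hR ⋙ L ≅ 𝟭 _) := by
  have : (restrictFunctor hR).IsRightAdjoint :=
    isRightAdjoint_of_exists_isUniversalArrow fun X => by
      obtain ⟨Y, f, hY, hf⟩ := hP _ X.property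
      exact ⟨⟨Y, hY⟩, _, isUniversalArrow_homMk hR hf⟩
  have : (restrictFunctor hR).Faithful := ⟨fun h => (bijective_map_restrictFunctor hR hQ _ _).1 h⟩
  have : (restrictFunctor hR).Full := ⟨fun g => (bijective_map_restrictFunctor hR hQ _ _).2 g⟩
  exact ⟨_, .ofIsRightAdjoint (restrictFunctor hR),
    ⟨asIso (Adjunction.ofIsRightAdjoint (restrictFunctor hR)).counit⟩⟩

end FullSubcategory

section BoundedObjects

open Limits Pretriangulated Triangulated DerivedCategory

variable {C : Type*} [Category* C] [Abelian C] [HasDerivedCategory C]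

lemma bounded_iff_exists_isGE_isLE (X : DerivedCategory C) :
    TStructure.t.bounded X ↔ ∃ a b : ℤ, X.IsGE a ∧ X.IsLE b :=
  ⟨fun ⟨⟨a, ha⟩, ⟨b, hb⟩⟩ => ⟨a, b, ha, hb⟩, fun ⟨a, b, ha, hb⟩ => ⟨⟨a, ha⟩, ⟨b, hb⟩⟩⟩

lemma bounded_eq_exists_isBoundedComplex :
    TStructure.t.bounded = fun X : DerivedCategory C =>
      ∃ K : CochainComplex C ℤ, IsBoundedComplex K ∧ Nonempty (X ≅ Q.obj K) := by
  ext X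
  rw [bounded_iff_exists_isGE_isLE]
  constructor
  · rintro ⟨a, b, _, _⟩
    obtain ⟨K, _, _, hK⟩ := exists_iso_Q_obj_of_isGE_of_isLE X a b
    exact ⟨K, ⟨a, b, fun i hi => hi.elim (fun h => K.isZero_of_isStrictlyGE a i h)
      (fun h => K.isZero_of_isStrictlyLE b i h)⟩, hK⟩
  · rintro ⟨K, ⟨a, b, hK⟩, ⟨e⟩⟩
    have : K.IsStrictlyGE a := (K.isStrictlyGE_iff a).2 fun i hi => hK i (.inl hi)
    have : K.IsStrictlyLE b := (K.isStrictlyLE_iff b).2 fun i hi => hK i (.inr hi)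
    exact ⟨a, b, TStructure.t.isGE_of_iso e.symm a, TStructure.t.isLE_of_iso e.symm b⟩

lemma bounded_singleFunctor_obj (M : C) (n : ℤ) :
    TStructure.t.bounded ((singleFunctor C n).obj M) :=
  (bounded_iff_exists_isGE_isLE _).2 ⟨n, n, inferInstance, inferInstance⟩

section Devissage

variable {P : ObjectProperty (DerivedCategory C)} [P.IsClosedUnderIsomorphisms]

lemma prop_of_isGE_of_isLE (hP : ∀ (M : C) (n : ℤ), P ((singleFunctor C n).obj M))
    (X : DerivedCategory C) (n : ℤ) [X.IsGE n] [X.IsLE n] : P X := by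
  obtain ⟨M, ⟨e⟩⟩ := exists_iso_singleFunctor_obj_of_isGE_of_isLE X n
  exact P.prop_of_iso e.symm (hP M n)

lemma prop_of_isGE_of_isLE_add [P.IsTriangulatedClosed₂]
    (hP : ∀ (M : C) (n : ℤ), P ((singleFunctor C n).obj M)) (k : ℕ) :
    ∀ (a : ℤ) (X : DerivedCategory C) [X.IsGE a] [X.IsLE (a + k)], P X := by
  induction k with
  | zero =>
    intro a X _ hX
    rw [Nat.cast_zero, add_zero] at hX
    exact prop_of_isGE_of_isLE hP X a
  | succ k ih =>
    intro a X _ hX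
    have : TStructure.t.IsLE X (a + 1 + k) := by
      rwa [add_assoc, add_comm 1 (k : ℤ), ← Nat.cast_succ]
    have : TStructure.t.IsGE ((TStructure.t.truncGT a).obj X) (a + 1) :=
      TStructure.t.isGE_truncGT_obj X a (a + 1)
    exact P.ext_of_isTriangulatedClosed₂ _ (TStructure.t.triangleLEGT_distinguished a X)
      (prop_of_isGE_of_isLE hP ((TStructure.t.truncLE a).obj X) a)
      (ih (a + 1) ((TStructure.t.truncGT a).obj X))

lemma bounded_le_of_singleFunctor [P.IsTriangulatedClosed₂] [P.IsStableUnderShift ℤ]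
    (hP : ∀ M : C, P ((singleFunctor C 0).obj M)) : TStructure.t.bounded ≤ P := by
  have hPn (M : C) (n : ℤ) : P ((singleFunctor C n).obj M) :=
    P.prop_of_iso (((singleFunctors C).shiftIso (-n) n 0 (by lia)).app M)
      (P.le_shift (-n) _ (hP M))
  intro X hX
  obtain ⟨a, b, _, _⟩ := (bounded_iff_exists_isGE_isLE X).1 hX
  have : TStructure.t.IsLE X (a + (b - a).toNat) := TStructure.t.isLE_of_le X b _ (by lia)
  exact prop_of_isGE_of_isLE_add hPn (b - a).toNat a X

end Devissage

variable {D : Type*} [Category* D] [Abelian D] [HasDerivedCategory D]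

lemma bounded_le_inverseImage_mapDerivedCategory (G : D ⥤ C) [G.Additive] [PreservesFiniteLimits G]
    [PreservesFiniteColimits G] :
    TStructure.t.bounded ≤ TStructure.t.bounded.inverseImage G.mapDerivedCategory :=
  bounded_le_of_singleFunctor fun M =>
    TStructure.t.bounded.prop_of_iso ((G.mapDerivedCategorySingleFunctor 0).symm.app M)
      (bounded_singleFunctor_obj (G.obj M) 0)

end BoundedObjects

section HomotopyAdjunction

variable {C D : Type*} [Category* C] [Category* D] [Preadditive C] [Preadditive D]
  {F : C ⥤ D} {G : D ⥤ C} [F.Additive] [G.Additive] {ι : Type*}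

/-- The degreewise extension of an adjunction between additive functors to homological complexes. -/
def mapHomologicalComplexAdjunction (adj : F ⊣ G) (c : ComplexShape ι) :
    F.mapHomologicalComplex c ⊣ G.mapHomologicalComplex c where
  unit :=
    { app := fun K =>
        { f := fun i => adj.unit.app (K.X i), comm' := fun _ _ _ => adj.unit_naturality _ }
      naturality := fun _ _ φ => HomologicalComplex.hom_ext _ _ fun i =>
        adj.unit.naturality (φ.f i) }
  counit :=
    { app := fun K =>
        { f := fun i => adj.counit.app (K.X i)
          comm' := fun _ _ _ => (adj.counit_naturality _).symm }
      naturality := fun _ _ φ => HomologicalComplex.hom_ext _ _ fun i =>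
        adj.counit.naturality (φ.f i) }
  left_triangle_components K := HomologicalComplex.hom_ext _ _ fun i =>
    adj.left_triangle_components (K.X i)
  right_triangle_components K := HomologicalComplex.hom_ext _ _ fun i =>
    adj.right_triangle_components (K.X i)

/-- The adjunction between homotopy categories induced by an adjunction between additive
functors. -/
def mapHomotopyCategoryAdjunction (adj : F ⊣ G) (c : ComplexShape ι) :
    F.mapHomotopyCategory c ⊣ G.mapHomotopyCategory c where
  unit :=
    { app := fun K => (HomotopyCategory.quotient C c).map
        ((mapHomologicalComplexAdjunction adj c).unit.app K.as)
      naturality := by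
        rintro ⟨K⟩ ⟨L⟩ ⟨f⟩
        exact congrArg (HomotopyCategory.quotient C c).map
          ((mapHomologicalComplexAdjunction adj c).unit.naturality f) }
  counit :=
    { app := fun K => (HomotopyCategory.quotient D c).map
        ((mapHomologicalComplexAdjunction adj c).counit.app K.as)
      naturality := by
        rintro ⟨K⟩ ⟨L⟩ ⟨f⟩
        exact congrArg (HomotopyCategory.quotient D c).map
          ((mapHomologicalComplexAdjunction adj c).counit.naturality f) }
  left_triangle_components K := congrArg (HomotopyCategory.quotient D c).map
    ((mapHomologicalComplexAdjunction adj c).left_triangle_components K.as)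
  right_triangle_components K := congrArg (HomotopyCategory.quotient C c).map
    ((mapHomologicalComplexAdjunction adj c).right_triangle_components K.as)

lemma mapHomotopyCategoryAdjunction_unit_app (adj : F ⊣ G) {c : ComplexShape ι}
    (K : HomologicalComplex C c) :
    (mapHomotopyCategoryAdjunction adj c).unit.app ((HomotopyCategory.quotient C c).obj K) =
      (HomotopyCategory.quotient C c).map ((mapHomologicalComplexAdjunction adj c).unit.app K) ≫
        (G.mapHomotopyCategoryFactors c).inv.app ((F.mapHomologicalComplex c).obj K) :=
  (Category.comp_id _).symm

end HomotopyAdjunction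

section KProjective

open Limits Triangulated DerivedCategory

variable {C D : Type*} [Category* C] [Category* D] [Abelian C] [Abelian D]
  [HasDerivedCategory C] [HasDerivedCategory D] {F : C ⥤ D} {G : D ⥤ C} [F.Additive] [G.Additive]
  [PreservesFiniteLimits G] [PreservesFiniteColimits G]

lemma mapDerivedCategoryFactorsh_inv_app_comp_map (G : D ⥤ C) [G.Additive]
    [PreservesFiniteLimits G] [PreservesFiniteColimits G] (L : CochainComplex D ℤ) :
    G.mapDerivedCategoryFactorsh.inv.app ((HomotopyCategory.quotient D (.up ℤ)).obj L) ≫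
        G.mapDerivedCategory.map ((quotientCompQhIso D).hom.app L) =
      Qh.map ((G.mapHomotopyCategoryFactors (.up ℤ)).hom.app L) ≫
        (quotientCompQhIso C).hom.app ((G.mapHomologicalComplex (.up ℤ)).obj L) ≫
          G.mapDerivedCategoryFactors.inv.app L := by
  rw [← cancel_epi (G.mapDerivedCategoryFactorsh.hom.app _), Iso.hom_inv_id_app_assoc,
    G.mapDerivedCategoryFactorsh_hom_app]
  simp [← Functor.map_comp_assoc]

section

variable (adj : F ⊣ G) (X : CochainComplex C ℤ) [X.IsKProjective]
  [CochainComplex.IsKProjective ((F.mapHomologicalComplex (.up ℤ)).obj X)]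

lemma isUniversalArrow_Q_map_unit :
    IsUniversalArrow G.mapDerivedCategory
      (Q.map ((mapHomologicalComplexAdjunction adj (.up ℤ)).unit.app X) ≫
        G.mapDerivedCategoryFactors.inv.app ((F.mapHomologicalComplex (.up ℤ)).obj X)) := by
  let FX := (F.mapHomologicalComplex (.up ℤ)).obj X
  let unit := (mapHomologicalComplexAdjunction adj (.up ℤ)).unit.app X
  have universal_Qh : IsUniversalArrow G.mapDerivedCategory
      (Qh.map ((HomotopyCategory.quotient C (.up ℤ)).map unit ≫
          (G.mapHomotopyCategoryFactors (.up ℤ)).inv.app FX) ≫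
        G.mapDerivedCategoryFactorsh.inv.app ((HomotopyCategory.quotient D (.up ℤ)).obj FX)) := by
    rw [← mapHomotopyCategoryAdjunction_unit_app]
    exact (isUniversalArrow_unit (mapHomotopyCategoryAdjunction adj (.up ℤ)) _).of_commSq
      G.mapDerivedCategoryFactorsh.symm
      (fun Z => CochainComplex.IsKProjective.Qh_map_bijective X Z)
      (fun Z => CochainComplex.IsKProjective.Qh_map_bijective FX Z)
  refine universal_Qh.of_iso ((quotientCompQhIso C).app X) ((quotientCompQhIso D).app FX) ?_
  rw [Iso.app_hom, Iso.app_hom, Category.assoc, mapDerivedCategoryFactorsh_inv_app_comp_map G FX]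
  simp [unit, FX]

variable {X} in
lemma isFullyFaithfulFrom_Q_obj {L : CochainComplex D ℤ}
    (f : X ⟶ (G.mapHomologicalComplex (.up ℤ)).obj L) [QuasiIso f]
    [QuasiIso (((mapHomologicalComplexAdjunction adj (.up ℤ)).homEquiv X L).symm f)] :
    isFullyFaithfulFrom G.mapDerivedCategory (Q.obj L) := by
  let adjC := mapHomologicalComplexAdjunction adj (.up ℤ)
  let g := (adjC.homEquiv X L).symm f
  have transpose_eq : (Q.map (adjC.unit.app X) ≫ G.mapDerivedCategoryFactors.inv.app _) ≫
      G.mapDerivedCategory.map (Q.map g) = Q.map f ≫ G.mapDerivedCategoryFactors.inv.app L := by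
    have naturality := G.mapDerivedCategoryFactors.inv.naturality g
    dsimp only [Functor.comp_obj, Functor.comp_map] at naturality
    rw [Category.assoc, ← naturality, ← Category.assoc, ← Q.map_comp]
    congr 2
    exact (adjC.homEquiv_unit ..).symm.trans ((adjC.homEquiv X L).apply_symm_apply f)
  have : IsIso ((Q.map (adjC.unit.app X) ≫ G.mapDerivedCategoryFactors.inv.app _) ≫
      G.mapDerivedCategory.map (Q.map g)) := by
    rw [transpose_eq]
    infer_instance
  exact (isUniversalArrow_Q_map_unit adj X).of_isIso_comp (Q.map g)

end

end KProjective

section Resolution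

open Limits Triangulated DerivedCategory

variable {C D : Type*} [Category* C] [Category* D] [Abelian C] [Abelian D]

section

variable {M : C} (P : ProjectiveResolution M) (F : C ⥤ D) [F.Additive]

lemma isZero_leftDerived_succ_iff [HasProjectiveResolutions C] (n : ℕ) :
    IsZero ((F.leftDerived (n + 1)).obj M) ↔
      ((P.complex.sc' (n + 2) (n + 1) n).map F).Exact := by
  rw [(P.isoLeftDerivedObj F (n + 1)).isZero_iff]
  exact (HomologicalComplex.exactAt_iff_isZero_homology _ _).symm.trans
    (HomologicalComplex.exactAt_iff' _ (n + 2) (n + 1) n (by simp) (by simp))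

lemma cochainComplexXIso_hom_comp_d {n₁ n₂ : ℤ} {k₁ k₂ : ℕ} (h₁ : -k₁ = n₁) (h₂ : -k₂ = n₂) :
    (P.cochainComplexXIso n₁ k₁ h₁).hom ≫ P.complex.d k₁ k₂ =
      P.cochainComplex.d n₁ n₂ ≫ (P.cochainComplexXIso n₂ k₂ h₂).hom := by
  simp [P.cochainComplex_d n₁ n₂ k₁ k₂ h₁ h₂]

lemma exactAt_mapHomologicalComplex_cochainComplex_iff (n : ℕ) :
    ((F.mapHomologicalComplex (.up ℤ)).obj P.cochainComplex).ExactAt (-(n + 1 : ℕ)) ↔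
      ((P.complex.sc' (n + 2) (n + 1) n).map F).Exact := by
  rw [HomologicalComplex.exactAt_iff' _ (-(n + 2 : ℕ) : ℤ) (-(n + 1 : ℕ) : ℤ) (-n : ℤ)
    (by simp; lia) (by simp)]
  exact ShortComplex.exact_iff_of_iso (F.mapShortComplex.mapIso (ShortComplex.isoMk
    (S₁ := P.cochainComplex.sc' _ _ _) (S₂ := P.complex.sc' _ _ _)
    (P.cochainComplexXIso _ _) (P.cochainComplexXIso _ _) (P.cochainComplexXIso _ _)
    (cochainComplexXIso_hom_comp_d P rfl rfl) (cochainComplexXIso_hom_comp_d P rfl rfl)))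

lemma exactAt_mapHomologicalComplex_cochainComplex_iff_isZero_leftDerived
    [HasProjectiveResolutions C] (n : ℕ) :
    ((F.mapHomologicalComplex (.up ℤ)).obj P.cochainComplex).ExactAt (-(n + 1 : ℕ)) ↔
      IsZero ((F.leftDerived (n + 1)).obj M) := by
  rw [exactAt_mapHomologicalComplex_cochainComplex_iff, isZero_leftDerived_succ_iff]

lemma bounded_Q_obj_mapHomologicalComplex_cochainComplex [HasDerivedCategory D]
    [HasProjectiveResolutions C] {d : ℕ}
    (hd : ∀ n, d < n → IsZero ((F.leftDerived n).obj M)) :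
    TStructure.t.bounded (Q.obj ((F.mapHomologicalComplex (.up ℤ)).obj P.cochainComplex)) := by
  refine (bounded_iff_exists_isGE_isLE _).2 ⟨-d, 0, ?_, inferInstance⟩
  rw [isGE_Q_obj_iff, CochainComplex.isGE_iff]
  intro i hi
  obtain ⟨n, rfl⟩ : ∃ n : ℕ, i = -(n + 1 : ℕ) := ⟨(-i).toNat - 1, by lia⟩
  exact (exactAt_mapHomologicalComplex_cochainComplex_iff_isZero_leftDerived P F n).2
    (hd (n + 1) (by lia))

lemma quasiIso_mapShortComplex_map_of_zeros [PreservesFiniteColimits F] {S₁ S₂ : ShortComplex C}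
    (φ : S₁ ⟶ S₂) [ShortComplex.QuasiIso φ] (hg₁ : S₁.g = 0) (hf₂ : S₂.f = 0) (hg₂ : S₂.g = 0) :
    ShortComplex.QuasiIso (F.mapShortComplex.map φ) := by
  have preserves_rightExact : ∀ S : ShortComplex C, S.Exact ∧ Epi S.g →
      (S.map F).Exact ∧ Epi (F.map S.g) :=
    (F.preservesFiniteColimits_tfae.out 3 1).1 ‹PreservesFiniteColimits F›
  have map_eq_zero {X Y : C} {f : X ⟶ Y} (hf : f = 0) : F.map f = 0 := by rw [hf, F.map_zero]
  exact (ShortComplex.quasiIso_iff_of_zeros' (F.mapShortComplex.map φ) (map_eq_zero hg₁)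
    (map_eq_zero hf₂) (map_eq_zero hg₂)).2 (preserves_rightExact _
      ((ShortComplex.quasiIso_iff_of_zeros' φ hg₁ hf₂ hg₂).1 inferInstance))

lemma quasiIso_map_π' [PreservesFiniteColimits F] [HasProjectiveResolutions C]
    (hM : ∀ n : ℕ, IsZero ((F.leftDerived (n + 1)).obj M)) :
    QuasiIso ((F.mapHomologicalComplex (.up ℤ)).map P.π') := by
  refine ⟨fun i => ?_⟩
  rcases lt_trichotomy i 0 with hi | rfl | hi
  · obtain ⟨n, rfl⟩ : ∃ n : ℕ, i = -(n + 1 : ℕ) := ⟨(-i).toNat - 1, by lia⟩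
    rw [quasiIsoAt_iff_exactAt']
    · exact (exactAt_mapHomologicalComplex_cochainComplex_iff_isZero_leftDerived P F n).2 (hM n)
    · exact CochainComplex.exactAt_of_isGE _ 0 _
  · rw [quasiIsoAt_iff' _ (-1) 0 1 (by simp) (by simp)]
    have := (quasiIsoAt_iff' P.π' (-1) 0 1 (by simp) (by simp)).1 inferInstance
    exact quasiIso_mapShortComplex_map_of_zeros F
      ((HomologicalComplex.shortComplexFunctor' C (.up ℤ) (-1) 0 1).map P.π')
      ((P.cochainComplex.isZero_of_isStrictlyLE 0 1).eq_of_tgt _ _) rfl rfl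
  · rw [quasiIsoAt_iff_exactAt']
    · exact CochainComplex.exactAt_of_isLE _ 0 _
    · exact CochainComplex.exactAt_of_isLE _ 0 _

end

variable {F : C ⥤ D} {G : D ⥤ C} [F.Additive]

lemma isKProjective_mapHomologicalComplex_cochainComplex (adj : F ⊣ G) [G.PreservesEpimorphisms]
    {M : C} (P : ProjectiveResolution M) :
    CochainComplex.IsKProjective ((F.mapHomologicalComplex (.up ℤ)).obj P.cochainComplex) := by
  have (n : ℤ) : Projective (((F.mapHomologicalComplex (.up ℤ)).obj P.cochainComplex).X n) :=
    adj.map_projective (P.cochainComplex.X n) inferInstance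
  exact CochainComplex.isKProjective_of_projective _ 0

section

variable [G.Additive]

lemma isIso_mapHomologicalComplexAdjunction_counit_app (adj : F ⊣ G) [IsIso adj.counit]
    {ι : Type*} (c : ComplexShape ι) (L : HomologicalComplex D c) :
    IsIso ((mapHomologicalComplexAdjunction adj c).counit.app L) := by
  have (i : ι) : IsIso (((mapHomologicalComplexAdjunction adj c).counit.app L).f i) :=
    inferInstanceAs (IsIso (adj.counit.app (L.X i)))
  exact HomologicalComplex.Hom.isIso_of_components _

variable [HasProjectiveResolutions C]

lemma exists_quasiIso_and_quasiIso_homEquiv_symm (adj : F ⊣ G) [IsIso adj.counit] {V : D}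
    (P : ProjectiveResolution (G.obj V))
    (hV : ∀ n : ℕ, IsZero ((F.leftDerived (n + 1)).obj (G.obj V))) :
    ∃ f : P.cochainComplex ⟶
        (G.mapHomologicalComplex (.up ℤ)).obj ((CochainComplex.singleFunctor D 0).obj V),
      QuasiIso f ∧
        QuasiIso (((mapHomologicalComplexAdjunction adj (.up ℤ)).homEquiv _ _).symm f) := by
  have := adj.leftAdjoint_preservesColimits.{0, 0}
  have := quasiIso_map_π' P F hV
  have := isIso_mapHomologicalComplexAdjunction_counit_app adj (.up ℤ)
    ((CochainComplex.singleFunctor D 0).obj V)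
  let e : (CochainComplex.singleFunctor C 0).obj (G.obj V) ≅
      (G.mapHomologicalComplex (.up ℤ)).obj ((CochainComplex.singleFunctor D 0).obj V) :=
    (HomologicalComplex.singleMapHomologicalComplex G (.up ℤ) 0).symm.app V
  refine ⟨P.π' ≫ e.hom, inferInstance, ?_⟩
  rw [Adjunction.homEquiv_counit, Functor.map_comp]
  infer_instance

variable [PreservesFiniteLimits G] [PreservesFiniteColimits G]
  [HasDerivedCategory C] [HasDerivedCategory D]

lemma bounded_le_hasUniversalArrowTo_bounded (adj : F ⊣ G) {d : ℕ}
    (hd : ∀ (M : C) (n : ℕ), d < n → IsZero ((F.leftDerived n).obj M)) :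
    TStructure.t.bounded ≤ hasUniversalArrowTo G.mapDerivedCategory TStructure.t.bounded := by
  refine bounded_le_of_singleFunctor fun M => ?_
  let P := projectiveResolution M
  have := isKProjective_mapHomologicalComplex_cochainComplex adj P
  have : P.cochainComplex.IsKProjective := CochainComplex.isKProjective_of_projective _ 0
  exact ObjectProperty.prop_of_iso _
    (asIso (Q.map P.π') ≪≫ (singleFunctorIsoCompQ C 0).symm.app M)
    ⟨_, _, bounded_Q_obj_mapHomologicalComplex_cochainComplex P F (hd M),
      isUniversalArrow_Q_map_unit adj P.cochainComplex⟩

lemma bounded_le_isFullyFaithfulFrom (adj : F ⊣ G) [IsIso adj.counit]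
    (hV : ∀ (V : D) (n : ℕ), IsZero ((F.leftDerived (n + 1)).obj (G.obj V))) :
    TStructure.t.bounded ≤ isFullyFaithfulFrom G.mapDerivedCategory := by
  refine bounded_le_of_singleFunctor fun V => ?_
  let P := projectiveResolution (G.obj V)
  have := isKProjective_mapHomologicalComplex_cochainComplex adj P
  have : P.cochainComplex.IsKProjective := CochainComplex.isKProjective_of_projective _ 0
  obtain ⟨f, _, _⟩ := exists_quasiIso_and_quasiIso_homEquiv_symm adj P (hV V)
  exact ObjectProperty.prop_of_iso _ ((singleFunctorIsoCompQ D 0).symm.app V)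
    (isFullyFaithfulFrom_Q_obj adj f)

end

end Resolution

section IdempotentIdeal

variable {R M N : Type*} [Ring R] [AddCommGroup M] [Module R M] [AddCommGroup N] [Module R N]
  {I : Ideal R}

lemma map_smul_top_le_range_mapRange_subtype [I.IsTwoSided] {α : Type*} (s : M →ₗ[R] α →₀ R) :
    (I • (⊤ : Submodule R M)).map s ≤
      LinearMap.range (Finsupp.mapRange.linearMap (α := α) I.subtype) := by
  rw [Submodule.map_smul'', Submodule.smul_le]
  rintro a ha t -
  refine ⟨t.mapRange (fun r => ⟨a * r, I.mul_mem_right r ha⟩) (by simp), ?_⟩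
  ext
  simp

lemma linearCombination_mapRange_subtype_mem (f : M →₀ I) :
    Finsupp.linearCombination R id (Finsupp.mapRange.linearMap I.subtype f) ∈
      I • (⊤ : Submodule R M) := by
  rw [Finsupp.linearCombination_apply]
  refine Submodule.sum_mem _ fun m _ => Submodule.smul_mem_smul ?_ trivial
  simp

variable (M) in
lemma projective_smul_top [I.IsTwoSided] [Module.Projective R I] [Module.Projective R M] :
    Module.Projective R (I • (⊤ : Submodule R M) : Submodule R M) := by
  classical
  have : Module.Projective R (M →₀ I) := .of_equiv (finsuppLEquivDirectSum R I M).symm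
  -- A section `s` of `(M →₀ R) → M` restricts to a section of `(M →₀ I) → I • M`.
  obtain ⟨s, hs⟩ := Module.projective_def'.1 ‹Module.Projective R M›
  let ι : (M →₀ I) →ₗ[R] M →₀ R := Finsupp.mapRange.linearMap I.subtype
  have ι_injective : Function.Injective ι :=
    Finsupp.mapRange_injective _ (map_zero _) I.injective_subtype
  let p : (M →₀ I) →ₗ[R] (I • (⊤ : Submodule R M) : Submodule R M) :=
    (Finsupp.linearCombination R id ∘ₗ ι).codRestrict _ linearCombination_mapRange_subtype_mem
  let i : (I • (⊤ : Submodule R M) : Submodule R M) →ₗ[R] M →₀ I :=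
    (LinearEquiv.ofInjective ι ι_injective).symm ∘ₗ
      (s ∘ₗ Submodule.subtype _).codRestrict _ fun x =>
        map_smul_top_le_range_mapRange_subtype s ⟨x, x.2, rfl⟩
  have ι_i (x) : ι (i x) = s x :=
    congr_arg Subtype.val ((LinearEquiv.ofInjective ι ι_injective).apply_symm_apply _)
  refine Module.Projective.of_split i p (LinearMap.ext fun x => Subtype.ext ?_)
  change Finsupp.linearCombination R id (ι (i x)) = x
  rw [ι_i]
  exact LinearMap.congr_fun hs x

variable (f : M →ₗ[R] N) {L : Submodule R M}

lemma exists_projection_ker_inf [Module.Projective R (L.map f)] :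
    ∃ p : L →ₗ[R] (LinearMap.ker f ⊓ L : Submodule R M), ∀ x : L, f x = 0 → (p x : M) = x := by
  obtain ⟨s, hs⟩ := Module.projective_lifting_property (f.submoduleMap L) .id
    (f.submoduleMap_surjective L)
  have f_s (y : L.map f) : f (s y) = y := congr_arg Subtype.val (LinearMap.congr_fun hs y)
  refine ⟨(L.subtype ∘ₗ (.id - s ∘ₗ f.submoduleMap L)).codRestrict _ fun x => ⟨?_, Subtype.mem _⟩,
    fun x hx => ?_⟩
  · change f (x - s (f.submoduleMap L x)) = 0
    rw [map_sub, f_s, LinearMap.submoduleMap_coe_apply, sub_self]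
  · have map_eq_zero : f.submoduleMap L x = 0 := Subtype.ext hx
    change (x : M) - s (f.submoduleMap L x) = x
    rw [map_eq_zero, map_zero, Submodule.coe_zero, sub_zero]

lemma projective_ker_inf [Module.Projective R L] [Module.Projective R (L.map f)] :
    Module.Projective R (LinearMap.ker f ⊓ L : Submodule R M) := by
  obtain ⟨p, hp⟩ := exists_projection_ker_inf f (L := L)
  exact Module.Projective.of_split (Submodule.inclusion inf_le_right) p
    (LinearMap.ext fun x => Subtype.ext (hp _ x.2.1))

lemma ker_inf_le_smul_ker [Module.Projective R (L.map f)] (hL : I • L = L) :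
    LinearMap.ker f ⊓ L ≤ I • LinearMap.ker f := by
  obtain ⟨p, hp⟩ := exists_projection_ker_inf f (L := L)
  have smul_top : I • (⊤ : Submodule R L) = ⊤ := by
    apply Submodule.map_injective_of_injective L.injective_subtype
    rw [Submodule.map_smul'', Submodule.map_subtype_top, hL]
  let q : L →ₗ[R] M := Submodule.subtype _ ∘ₗ p
  calc LinearMap.ker f ⊓ L
    _ ≤ (⊤ : Submodule R L).map q := fun x hx => ⟨⟨x, hx.2⟩, trivial, hp _ hx.1⟩
    _ = I • (⊤ : Submodule R L).map q := by rw [← Submodule.map_smul'', smul_top]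
    _ ≤ I • LinearMap.ker f :=
      Submodule.smul_mono le_rfl (Submodule.map_le_iff_le_comap.2 fun x _ => (p x).2.1)

lemma ker_inf_smul_top (hI : IsIdempotentElem I)
    [Module.Projective R (I • LinearMap.range f : Submodule R N)] :
    LinearMap.ker f ⊓ I • ⊤ = I • LinearMap.ker f := by
  have : Module.Projective R ((I • (⊤ : Submodule R M)).map f) := by
    rwa [Submodule.map_smul'', ← LinearMap.range_eq_map]
  refine le_antisymm (ker_inf_le_smul_ker f ?_)
    (le_inf Submodule.smul_le_right (Submodule.smul_mono le_rfl le_top))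
  rw [← Submodule.mul_smul, hI.eq]

lemma projective_smul_ker [I.IsTwoSided] (hI : IsIdempotentElem I)
    [Module.Projective R I] [Module.Projective R M]
    [Module.Projective R (I • LinearMap.range f : Submodule R N)] :
    Module.Projective R (I • LinearMap.ker f : Submodule R M) := by
  have := projective_smul_top M (I := I)
  have : Module.Projective R ((I • (⊤ : Submodule R M)).map f) := by
    rwa [Submodule.map_smul'', ← LinearMap.range_eq_map]
  rw [← ker_inf_smul_top f hI]
  exact projective_ker_inf f

end IdempotentIdeal

section ResolutionByModules

variable {R : Type u} [Ring R] {I : Ideal R}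
  {M : ModuleCat.{u} R} [Module.Projective R (I • (⊤ : Submodule R M) : Submodule R M)]
  (P : ProjectiveResolution M)

lemma range_d_one_zero :
    LinearMap.range (P.complex.d 1 0).hom = LinearMap.ker (P.π.f 0).hom :=
  (ShortComplex.moduleCat_exact_iff_range_eq_ker _).1 P.exact₀

lemma range_d_succ (n : ℕ) :
    LinearMap.range (P.complex.d (n + 2) (n + 1)).hom =
      LinearMap.ker (P.complex.d (n + 1) n).hom :=
  (ShortComplex.moduleCat_exact_iff_range_eq_ker _).1 (P.exact_succ n)

lemma projective_smul_range_π :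
    Module.Projective R (I • LinearMap.range (P.π.f 0).hom : Submodule R _) := by
  rw [LinearMap.range_eq_top.2 ((ModuleCat.epi_iff_surjective (P.π.f 0)).1 inferInstance)]
  assumption

lemma projective_smul_range_d [I.IsTwoSided] [Module.Projective R I] (hI : IsIdempotentElem I)
    (n : ℕ) :
    Module.Projective R (I • LinearMap.range (P.complex.d (n + 1) n).hom : Submodule R _) := by
  have (k : ℕ) : Module.Projective R (P.complex.X k) :=
    (IsProjective.iff_projective _).2 (P.projective k)
  induction n with
  | zero =>
    have := projective_smul_range_π P (I := I)
    rw [range_d_one_zero]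
    exact projective_smul_ker _ hI
  | succ n ih =>
    rw [range_d_succ]
    exact projective_smul_ker _ hI

lemma range_d_inf_smul_top [I.IsTwoSided] [Module.Projective R I] (hI : IsIdempotentElem I)
    (n : ℕ) :
    LinearMap.range (P.complex.d (n + 1) n).hom ⊓ I • ⊤ =
      I • LinearMap.range (P.complex.d (n + 1) n).hom := by
  cases n with
  | zero =>
    have := projective_smul_range_π P (I := I)
    rw [range_d_one_zero]
    exact ker_inf_smul_top _ hI
  | succ n =>
    have := projective_smul_range_d P hI n
    rw [range_d_succ]
    exact ker_inf_smul_top _ hI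

end ResolutionByModules

section Tor

open Limits

variable {A B : Type u} [Ring A] [Ring B] (π : A →+* B) (hπ : Function.Surjective π)

lemma kerSMul_eq_smul_top (V : Type u) [AddCommGroup V] [Module A V] :
    kerSMul π V = RingHom.ker π • (⊤ : Submodule A V) := by
  apply le_antisymm
  · rw [kerSMul, Submodule.span_le]
    rintro _ ⟨r, hr, v, rfl⟩
    exact Submodule.smul_mem_smul hr trivial
  · exact Submodule.smul_le.2 fun r hr v _ => Submodule.subset_span ⟨r, hr, v, rfl⟩

lemma exact_map_torQuotFunctor {S : ShortComplex (ModuleCat.{u} A)} (hS : S.Exact)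
    (hg : LinearMap.range S.g.hom ⊓ kerSMul π S.X₃ ≤ (kerSMul π S.X₂).map S.g.hom) :
    (S.map (torQuotFunctor π hπ)).Exact := by
  rw [ShortComplex.moduleCat_exact_iff] at hS ⊢
  intro z hz
  obtain ⟨x, rfl⟩ := Submodule.Quotient.mk_surjective _ z
  have g_mem : S.g.hom x ∈ kerSMul π S.X₃ := (Submodule.Quotient.mk_eq_zero _).1 hz
  obtain ⟨y, hy, g_y⟩ := hg ⟨⟨x, rfl⟩, g_mem⟩
  obtain ⟨w, f_w⟩ := hS (x - y) (by rw [map_sub, sub_eq_zero]; exact g_y.symm)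
  refine ⟨Submodule.Quotient.mk w, (Submodule.Quotient.eq _).2 ?_⟩
  change S.f w - x ∈ kerSMul π S.X₂
  rw [f_w, sub_sub_cancel_left]
  exact neg_mem hy

variable {π}

theorem isZero_leftDerived_torQuotFunctor (hidem : IsIdempotentElem (RingHom.ker π))
    [Module.Projective A (RingHom.ker π)] (M : ModuleCat.{u} A)
    [Module.Projective A (RingHom.ker π • (⊤ : Submodule A M) : Submodule A M)] (n : ℕ) :
    IsZero (((torQuotFunctor π hπ).leftDerived (n + 1)).obj M) := by
  let P := projectiveResolution M
  refine (isZero_leftDerived_succ_iff P _ n).2 (exact_map_torQuotFunctor π hπ (P.exact_succ n) ?_)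
  rw [kerSMul_eq_smul_top, kerSMul_eq_smul_top, Submodule.map_smul'', ← LinearMap.range_eq_map]
  exact (range_d_inf_smul_top P hidem n).le

lemma ker_smul_top_restrictScalars (V : ModuleCat.{u} B) :
    RingHom.ker π • (⊤ : Submodule A ((ModuleCat.restrictScalars π).obj V)) = ⊥ := by
  rw [eq_bot_iff, Submodule.smul_le]
  intro r hr (v : V) _
  change π r • v = 0
  rw [RingHom.mem_ker.1 hr, zero_smul]

theorem isZero_leftDerived_torQuotFunctor_restrictScalars
    (hidem : IsIdempotentElem (RingHom.ker π)) [Module.Projective A (RingHom.ker π)]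
    (V : ModuleCat.{u} B) (n : ℕ) :
    IsZero (((torQuotFunctor π hπ).leftDerived (n + 1)).obj
      ((ModuleCat.restrictScalars π).obj V)) := by
  have : Module.Projective A
      (RingHom.ker π • (⊤ : Submodule A ((ModuleCat.restrictScalars π).obj V)) :
        Submodule A ((ModuleCat.restrictScalars π).obj V)) := by
    rw [ker_smul_top_restrictScalars]
    infer_instance
  exact isZero_leftDerived_torQuotFunctor hπ hidem _ n

end Tor

section TorAdjunction

variable {A B : Type u} [Ring A] [Ring B] (π : A →+* B) (hπ : Function.Surjective π)

lemma kerSMul_le_ker {M : ModuleCat.{u} A} {V : ModuleCat.{u} B}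
    (f : M ⟶ (ModuleCat.restrictScalars π).obj V) :
    kerSMul π M ≤ LinearMap.ker f.hom := by
  rw [kerSMul_eq_smul_top, LinearMap.le_ker_iff_map, Submodule.map_smul'', eq_bot_iff]
  exact (smul_mono_right _ le_top).trans (ker_smul_top_restrictScalars V).le

/-- The quotient map `M ⟶ M / (ker π) M`, which is the unit of the adjunction between
`B ⊗_A -` and restriction of scalars. -/
noncomputable def torQuotMk (M : ModuleCat.{u} A) :
    M ⟶ (ModuleCat.restrictScalars π).obj ((torQuotFunctor π hπ).obj M) :=
  ModuleCat.ofHom (Y := (ModuleCat.restrictScalars π).obj ((torQuotFunctor π hπ).obj M))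
    { toFun m := (Submodule.Quotient.mk m : M ⧸ kerSMul π M)
      map_add' _ _ := rfl
      map_smul' a m := (quotModule_proj_smul π hπ M a (Submodule.Quotient.mk m)).symm }

variable {π}

/-- The `B`-linear map `M / (ker π) M ⟶ V` induced by an `A`-linear map `M ⟶ V`. -/
noncomputable def torQuotDesc {M : ModuleCat.{u} A} {V : ModuleCat.{u} B}
    (f : M ⟶ (ModuleCat.restrictScalars π).obj V) : (torQuotFunctor π hπ).obj M ⟶ V :=
  letI := quotModule π hπ M
  ModuleCat.ofHom (X := M ⧸ kerSMul π M)
    { toFun := Submodule.liftQ _ f.hom (kerSMul_le_ker π f)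
      map_add' x y := map_add (Submodule.liftQ _ f.hom (kerSMul_le_ker π f)) x y
      map_smul' b x := by
        obtain ⟨a, rfl⟩ := hπ b
        rw [quotModule_proj_smul π hπ]
        exact map_smul (Submodule.liftQ _ f.hom (kerSMul_le_ker π f)) a x }

lemma torQuotFunctor_hom_ext {M : ModuleCat.{u} A} {V : ModuleCat.{u} B}
    {f g : (torQuotFunctor π hπ).obj M ⟶ V}
    (h : torQuotMk π hπ M ≫ (ModuleCat.restrictScalars π).map f =
      torQuotMk π hπ M ≫ (ModuleCat.restrictScalars π).map g) : f = g := by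
  refine ModuleCat.hom_ext (DFunLike.ext _ _ fun x => ?_)
  obtain ⟨m, rfl⟩ := Submodule.Quotient.mk_surjective _ x
  exact ConcreteCategory.congr_hom h m

lemma torQuotMk_desc {M : ModuleCat.{u} A} {V : ModuleCat.{u} B}
    (f : M ⟶ (ModuleCat.restrictScalars π).obj V) :
    torQuotMk π hπ M ≫ (ModuleCat.restrictScalars π).map (torQuotDesc hπ f) = f :=
  rfl

lemma torQuotMk_naturality {M N : ModuleCat.{u} A} (f : M ⟶ N) :
    torQuotMk π hπ M ≫ (ModuleCat.restrictScalars π).map ((torQuotFunctor π hπ).map f) =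
      f ≫ torQuotMk π hπ N :=
  rfl

/-- The adjunction between `B ⊗_A - = (-) / (ker π) (-)` and restriction of scalars. -/
noncomputable def torQuotAdjunction :
    torQuotFunctor π hπ ⊣ ModuleCat.restrictScalars.{u} π :=
  Adjunction.mkOfHomEquiv
    { homEquiv M V :=
        { toFun g := torQuotMk π hπ M ≫ (ModuleCat.restrictScalars π).map g
          invFun f := torQuotDesc hπ f
          left_inv _ := torQuotFunctor_hom_ext hπ (torQuotMk_desc hπ _)
          right_inv f := torQuotMk_desc hπ f }
      homEquiv_naturality_left_symm f g := torQuotFunctor_hom_ext hπ <| by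
        rw [Functor.map_comp, reassoc_of% torQuotMk_naturality hπ f]
        rfl
      homEquiv_naturality_right _ _ := rfl }

lemma bijective_torQuotAdjunction_counit_app (V : ModuleCat.{u} B) :
    Function.Bijective ((torQuotAdjunction hπ).counit.app V) := by
  refine ⟨fun x y hxy => ?_, fun v =>
    ⟨(Submodule.Quotient.mk (show (ModuleCat.restrictScalars π).obj V from v)), rfl⟩⟩
  obtain ⟨x, rfl⟩ := Submodule.Quotient.mk_surjective _ x
  obtain ⟨y, rfl⟩ := Submodule.Quotient.mk_surjective _ y
  exact congrArg Submodule.Quotient.mk (show x = y from hxy)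

instance isIso_torQuotAdjunction_counit : IsIso (torQuotAdjunction hπ).counit := by
  have (V : ModuleCat.{u} B) : IsIso ((torQuotAdjunction hπ).counit.app V) :=
    (ConcreteCategory.isIso_iff_bijective _).2 (bijective_torQuotAdjunction_counit_app hπ V)
  exact NatIso.isIso_of_isIso_app _

end TorAdjunction

section QuotByIdeal

variable {A : Type u} [Ring A] (I : Ideal A)

lemma ker_quotByIdealProj [I.IsTwoSided] : RingHom.ker (quotByIdealProj A I) = I := by
  let toQuotient : QuotByIdeal A I →+* A ⧸ I := RingQuot.lift ⟨Ideal.Quotient.mk I, by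
    rintro _ _ ⟨hx, rfl⟩
    rw [map_zero, Ideal.Quotient.eq_zero_iff_mem.2 hx]⟩
  ext a
  refine ⟨fun ha => Ideal.Quotient.eq_zero_iff_mem.1 ?_, fun ha => ?_⟩
  · calc Ideal.Quotient.mk I a = toQuotient (quotByIdealProj A I a) :=
          (RingQuot.lift_mkRingHom_apply _ _ _).symm
      _ = 0 := by rw [RingHom.mem_ker.1 ha, map_zero]
  · exact (RingQuot.mkRingHom_rel ⟨ha, rfl⟩).trans (map_zero _)

lemma isIso_counitMap (V : ModuleCat.{u} (QuotByIdeal A I)) : IsIso (counitMap A I V) := by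
  have counitMap_eq : counitMap A I V =
      (torQuotAdjunction (quotByIdealProj_surjective A I)).counit.app V := rfl
  rw [counitMap_eq]
  infer_instance

variable {I} in
lemma isIdempotentElem_of_span_mul_eq
    (hI : Submodule.span A {z : A | ∃ p ∈ I, ∃ q ∈ I, z = p * q} = I) : IsIdempotentElem I := by
  refine le_antisymm Ideal.mul_le_right ?_
  conv_lhs => rw [← hI]
  rw [Submodule.span_le]
  rintro _ ⟨p, hp, q, hq, rfl⟩
  exact Ideal.mul_mem_mul hp hq

end QuotByIdeal

section BoundedDerivedCategory

variable {C D : Type*} [Category* C] [Category* D] [Abelian C] [Abelian D]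
  [HasDerivedCategory C] [HasDerivedCategory D] [HasProjectiveResolutions C]
  {F : C ⥤ D} {G : D ⥤ C} [F.Additive] [G.Additive]
  [Limits.PreservesFiniteLimits G] [Limits.PreservesFiniteColimits G]

theorem exists_adjunction_boundedDerivedCategory (adj : F ⊣ G) [IsIso adj.counit]
    (hF : ∃ d : ℕ, ∀ (M : C) (n : ℕ), d < n → Limits.IsZero ((F.leftDerived n).obj M))
    (hG : ∀ (V : D) (n : ℕ), Limits.IsZero ((F.leftDerived (n + 1)).obj (G.obj V))) :
    ∃ ist : BoundedDerivedCategory D ⥤ BoundedDerivedCategory C,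
      Nonempty (ist ⋙ boundedInclusion C ≅ boundedInclusion D ⋙ G.mapDerivedCategory) ∧
      ∃ (istar : BoundedDerivedCategory C ⥤ BoundedDerivedCategory D) (_ : istar ⊣ ist),
        Nonempty (ist ⋙ istar ≅ 𝟭 _) := by
  obtain ⟨d, hd⟩ := hF
  have hP := bounded_le_hasUniversalArrowTo_bounded adj hd
  have hQ := bounded_le_isFullyFaithfulFrom adj hG
  have hR := bounded_le_inverseImage_mapDerivedCategory G
  rw [bounded_eq_exists_isBoundedComplex, bounded_eq_exists_isBoundedComplex] at hP hR
  rw [bounded_eq_exists_isBoundedComplex] at hQ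
  exact ⟨restrictFunctor hR, ⟨ObjectProperty.liftCompιIso _ _ _⟩,
    exists_adjunction_restrictFunctor hR hP hQ⟩

end BoundedDerivedCategory

/-- **Left adjoint, ideal version.**  Let `A` be a ring, `I` a two-sided
idempotent ideal which is projective as a left `A`-module, `B := A / I`, and
assume that `B` has finite flat dimension as a right `A`-module.  Then for
every `B`-module `V` one has `Tor^A_n(B, V) = 0` for `n ≥ 1` (the `Tor` groups
being computed as the left derived functors of `V ↦ B ⊗_A V = V/I·V`), the
natural map `B ⊗_A V → V` is an isomorphism and, equivalently, the functor
`i^* = B ⊗^L_A - : D^b(A) → D^b(B)` is left adjoint to the restriction functor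
`i_*` with `i^* ∘ i_*` naturally isomorphic to the identity of `D^b(B)`. -/
theorem tor_vanishing_and_left_adjoint (A : Type u) [Ring A] (I : Ideal A)
    (htwosided : ∀ x ∈ I, ∀ a : A, x * a ∈ I)
    (hidem : Submodule.span A {z : A | ∃ p ∈ I, ∃ q ∈ I, z = p * q} = I)
    (hproj : Module.Projective A ↥I)
    -- `B` has finite flat dimension as a right `A`-module:
    (hflat : ∃ d : ℕ, ∀ (V : ModuleCat.{u} A) (n : ℕ), d < n →
      Limits.IsZero
        ((((torQuotFunctor (quotByIdealProj A I)
          (quotByIdealProj_surjective A I)).leftDerived n)).obj V)) :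
    -- (1) `Tor^A_n(B, V) = 0` for every `B`-module `V` and every `n ≥ 1`
    (∀ (V : ModuleCat.{u} (QuotByIdeal A I)) (n : ℕ), 1 ≤ n →
      Limits.IsZero
        ((((torQuotFunctor (quotByIdealProj A I)
            (quotByIdealProj_surjective A I)).leftDerived n)).obj
          ((ModuleCat.restrictScalars (quotByIdealProj A I)).obj V))) ∧
    -- (2) the natural map `B ⊗_A V → V` is an isomorphism
    (∀ V : ModuleCat.{u} (QuotByIdeal A I), IsIso (counitMap A I V)) ∧
    -- (3) equivalently, `i^* = B ⊗^L_A -` is left adjoint to `i_*` on the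
    -- bounded derived categories, with `i^* ∘ i_* ≅ id`
    (∃ ist : BoundedDerivedCategory (ModuleCat.{u} (QuotByIdeal A I)) ⥤
        BoundedDerivedCategory (ModuleCat.{u} A),
      Nonempty ((ist ⋙ boundedInclusion (ModuleCat.{u} A)) ≅
        (boundedInclusion (ModuleCat.{u} (QuotByIdeal A I)) ⋙
          (ModuleCat.restrictScalars (quotByIdealProj A I)).mapDerivedCategory)) ∧
      ∃ (istar : BoundedDerivedCategory (ModuleCat.{u} A) ⥤
          BoundedDerivedCategory (ModuleCat.{u} (QuotByIdeal A I)))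
        (_ : istar ⊣ ist),
        Nonempty ((ist ⋙ istar) ≅ 𝟭 _)) := by
  have : I.IsTwoSided := ⟨fun a hx => htwosided _ hx a⟩
  have ker_eq := ker_quotByIdealProj I
  have ker_idempotent : IsIdempotentElem (RingHom.ker (quotByIdealProj A I)) :=
    ker_eq.symm ▸ isIdempotentElem_of_span_mul_eq hidem
  have : Module.Projective A (RingHom.ker (quotByIdealProj A I)) := ker_eq.symm ▸ hproj
  have tor_vanishing := isZero_leftDerived_torQuotFunctor_restrictScalars
    (quotByIdealProj_surjective A I) ker_idempotent
  refine ⟨fun V n hn => ?_, isIso_counitMap I, ?_⟩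
  · obtain ⟨m, rfl⟩ := Nat.exists_eq_add_of_le' hn
    exact tor_vanishing V m
  · exact exists_adjunction_boundedDerivedCategory
      (torQuotAdjunction (quotByIdealProj_surjective A I)) hflat tor_vanishing
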